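/- There exist constants c > 0 and ε₀ > 0 such that for all s ∈ ℕ and all ε ∈ (0, ε₀), the inverse of the star-discrepancy satisfies N(s,ε) ≥ c·s·ε^{−1}. -/

import Mathlib

open Finset

/-- Local discrepancy of the point set `x` at the corner point `t`:
`Δ(t) = #{n : x_n ∈ [0,t)}/N − ∏_j t_j`. -/
noncomputable def localDisc {N s : ℕ} (x : Fin N → Fin s → ℝ) (t : Fin s → ℝ) : ℝ :=
  ((univ.filter fun n => ∀ j, x n j < t j).card : ℝ) / N - ∏ j, t j

/-- Star-discrepancy `D*(x) = sup_{t ∈ [0,1]^s} |Δ(t)|`. -/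
noncomputable def starDisc {N s : ℕ} (x : Fin N → Fin s → ℝ) : ℝ :=
  sSup {d : ℝ | ∃ t : Fin s → ℝ, (∀ j, t j ∈ Set.Icc (0:ℝ) 1) ∧ d = |localDisc x t|}

/-- `N`-th minimal star-discrepancy `disc(N,s)`, the infimum of `D*` over all
`N`-element point sets in `[0,1)^s`. -/
noncomputable def minDisc (N s : ℕ) : ℝ :=
  sInf {d : ℝ | ∃ x : Fin N → Fin s → ℝ,
    (∀ n j, x n j ∈ Set.Ico (0:ℝ) 1) ∧ d = starDisc x}

/-- Inverse of the star-discrepancy: `N(s,ε) = min {N ≥ 1 : disc(N,s) ≤ ε}`. -/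
noncomputable def invDisc (s : ℕ) (ε : ℝ) : ℕ :=
  sInf {N : ℕ | 1 ≤ N ∧ minDisc N s ≤ ε}

/-! Fix a set `J` of directions and a threshold `r` close to `1`. Call a point exclusive for `J` if
it satisfies `r ≤ x_j` for exactly one `j ∈ J`, and call such a `j` active.

* There are at most `2 D* N` active directions: choosing one exclusive point for each of them puts
  all the chosen points on the upper boundary of a single box, and opening or closing that box
  changes the number of its points but not its volume.
* Extending the box with side `r` in the directions of `J` to full length in the active directions
  recaptures every exclusive point, at the cost of very little volume if few directions are active.
  Hence there are few exclusive points.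
* If a point satisfies `r ≤ x_j` for a nonempty set of directions `j`, then at least as many `J`
  contain exactly one of these directions as contain none of them. Averaging over `J` and comparing
  with the box volumes, for `r = 1 - 1 / s` some `J` has at least `(1 / 8 - 2 D*) N` exclusive
  points.

Together these force `s / 8 ≤ (2 N + 4 s) D*`. -/

section Combinatorics

variable {α ι : Type*} [Fintype ι] [DecidableEq ι]

lemma card_disjoint_le_card_inter_eq_one {S : Finset ι} (hS : S.Nonempty) :
    #{J : Finset ι | Disjoint S J} ≤ #{J : Finset ι | #(S ∩ J) = 1} := by
  obtain ⟨j, hj⟩ := hS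
  refine card_le_card_of_injOn (insert j) (fun J hJ => ?_) fun J hJ K hK h => ?_
  · have hSJ : S ∩ J = ∅ := disjoint_iff_inter_eq_empty.1 (by simpa using hJ)
    simp [inter_insert_of_mem hj, hSJ]
  · have not_mem {L : Finset ι} (hL : L ∈ ({J | Disjoint S J} : Finset (Finset ι))) : j ∉ L :=
      disjoint_left.1 (mem_filter.1 hL).2 hj
    rw [← erase_insert (not_mem hJ), h, erase_insert (not_mem hK)]

lemma sum_card_disjoint_le [Fintype α] (S : α → Finset ι) :
    ∑ J, #{a | Disjoint (S a) J} ≤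
      ∑ J, #{a | #(S a ∩ J) = 1} + 2 ^ Fintype.card ι * #{a | S a = ∅} := by
  calc ∑ J, #{a | Disjoint (S a) J} = ∑ a, #{J | Disjoint (S a) J} :=
        (sum_card_bipartiteAbove_eq_sum_card_bipartiteBelow fun a J => Disjoint (S a) J).symm
    _ ≤ ∑ a, (#{J | #(S a ∩ J) = 1} + if S a = ∅ then 2 ^ Fintype.card ι else 0) := by
        refine sum_le_sum fun a _ => ?_
        split_ifs with h
        · simp [h]
        · exact card_disjoint_le_card_inter_eq_one (nonempty_iff_ne_empty.2 h)
    _ = ∑ J, #{a | #(S a ∩ J) = 1} + 2 ^ Fintype.card ι * #{a | S a = ∅} := by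
        rw [sum_add_distrib, ← sum_filter, sum_const, smul_eq_mul, mul_comm #_]
        congr 1
        exact sum_card_bipartiteAbove_eq_sum_card_bipartiteBelow fun a J => #(S a ∩ J) = 1

end Combinatorics

section Discrepancy

variable {N s : ℕ} {x : Fin N → Fin s → ℝ} {t : Fin s → ℝ} {r : ℝ} {J : Finset (Fin s)}

lemma abs_localDisc_le_one (x : Fin N → Fin s → ℝ) (ht : ∀ j, t j ∈ Set.Icc (0 : ℝ) 1) :
    |localDisc x t| ≤ 1 := by
  have card_le : (#{n | ∀ j, x n j < t j} : ℝ) ≤ N := by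
    exact_mod_cast (card_le_univ _).trans_eq (Fintype.card_fin N)
  exact abs_sub_le_of_nonneg_of_le (by positivity)
    (div_le_one_of_le₀ card_le N.cast_nonneg)
    (prod_nonneg fun j _ => (ht j).1) (prod_le_one (fun j _ => (ht j).1) fun j _ => (ht j).2)

lemma abs_localDisc_le_starDisc (x : Fin N → Fin s → ℝ) (ht : ∀ j, t j ∈ Set.Icc (0 : ℝ) 1) :
    |localDisc x t| ≤ starDisc x := by
  refine le_csSup ⟨1, ?_⟩ ⟨t, ht, rfl⟩
  rintro _ ⟨u, hu, rfl⟩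
  exact abs_localDisc_le_one x hu

lemma starDisc_nonneg (x : Fin N → Fin s → ℝ) : 0 ≤ starDisc x :=
  Real.sSup_nonneg (by rintro _ ⟨t, _, rfl⟩; exact abs_nonneg _)

lemma minDisc_le_starDisc (hx : ∀ n j, x n j ∈ Set.Ico (0 : ℝ) 1) : minDisc N s ≤ starDisc x :=
  csInf_le ⟨0, by rintro _ ⟨y, _, rfl⟩; exact starDisc_nonneg y⟩ ⟨x, hx, rfl⟩

/-- The indices of the points of `x` in the half-open box `[0, t)`. -/
noncomputable def pointsInBox (x : Fin N → Fin s → ℝ) (t : Fin s → ℝ) : Finset (Fin N) :=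
  {n | ∀ j, x n j < t j}

/-- The indices of the points of `x` in the closed box `[0, t]`. -/
noncomputable def pointsInClosedBox (x : Fin N → Fin s → ℝ) (t : Fin s → ℝ) : Finset (Fin N) :=
  {n | ∀ j, x n j ≤ t j}

lemma abs_card_pointsInBox_sub_le (x : Fin N → Fin s → ℝ) (ht : ∀ j, t j ∈ Set.Icc (0 : ℝ) 1) :
    |(#(pointsInBox x t) : ℝ) - N * ∏ j, t j| ≤ N * starDisc x := by
  have card_eq : (#(pointsInBox x t) : ℝ) = N * (#(pointsInBox x t) / N) := by
    rcases N.eq_zero_or_pos with rfl | hN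
    · simp [eq_empty_of_isEmpty]
    · field_simp
  rw [card_eq, ← mul_sub, abs_mul, Nat.abs_cast]
  exact mul_le_mul_of_nonneg_left (abs_localDisc_le_starDisc x ht) N.cast_nonneg

lemma card_pointsInClosedBox_le (hx : ∀ n j, x n j ∈ Set.Ico (0 : ℝ) 1)
    (ht : ∀ j, t j ∈ Set.Icc (0 : ℝ) 1) :
    (#(pointsInClosedBox x t) : ℝ) ≤ N * ∏ j, t j + N * starDisc x := by
  have enlarged (η : ℝ) (hη : 0 < η) :
      (#(pointsInClosedBox x t) : ℝ) ≤ N * ∏ j, min 1 (t j + η) + N * starDisc x := by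
    have subset : pointsInClosedBox x t ⊆ pointsInBox x fun j => min 1 (t j + η) :=
      monotone_filter_right _ fun n _ hn j => lt_min (hx n j).2 (by linarith [hn j])
    have mem_Icc (j : Fin s) : min 1 (t j + η) ∈ Set.Icc (0 : ℝ) 1 :=
      ⟨le_min zero_le_one (by linarith [(ht j).1]), min_le_left _ _⟩
    have card_le : (#(pointsInClosedBox x t) : ℝ) ≤ #(pointsInBox x fun j => min 1 (t j + η)) := by
      exact_mod_cast card_le_card subset
    linarith [(abs_le.1 (abs_card_pointsInBox_sub_le x mem_Icc)).2]
  have tendsto_volume : Filter.Tendsto (fun η : ℝ => N * ∏ j, min 1 (t j + η) + N * starDisc x)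
      (nhdsWithin 0 (Set.Ioi 0)) (nhds (N * ∏ j, t j + N * starDisc x)) := by
    have cont : Continuous fun η : ℝ => N * ∏ j, min 1 (t j + η) + N * starDisc x := by fun_prop
    have lim := cont.tendsto 0
    simp only [add_zero, min_eq_right (ht _).2] at lim
    exact lim.mono_left nhdsWithin_le_nhds
  exact ge_of_tendsto tendsto_volume (eventually_mem_nhdsWithin.mono enlarged)

lemma card_pointsInClosedBox_sdiff_pointsInBox_le (hx : ∀ n j, x n j ∈ Set.Ico (0 : ℝ) 1)
    (ht : ∀ j, t j ∈ Set.Icc (0 : ℝ) 1) :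
    (#(pointsInClosedBox x t \ pointsInBox x t) : ℝ) ≤ 2 * N * starDisc x := by
  have subset : pointsInBox x t ⊆ pointsInClosedBox x t :=
    monotone_filter_right _ fun n _ hn j => (hn j).le
  rw [cast_card_sdiff subset]
  linarith [card_pointsInClosedBox_le hx ht, (abs_le.1 (abs_card_pointsInBox_sub_le x ht)).1]

lemma card_le_of_injOn_of_mem_facets (hx : ∀ n j, x n j ∈ Set.Ico (0 : ℝ) 1)
    (ht : ∀ j, t j ∈ Set.Icc (0 : ℝ) 1) {A : Finset (Fin s)} {q : Fin s → Fin N}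
    (q_injOn : Set.InjOn q A) (q_le : ∀ j ∈ A, ∀ i, x (q j) i ≤ t i)
    (le_q : ∀ j ∈ A, t j ≤ x (q j) j) :
    (#A : ℝ) ≤ 2 * N * starDisc x := by
  have q_mapsTo : Set.MapsTo q A (↑(pointsInClosedBox x t \ pointsInBox x t) : Set (Fin N)) := by
    intro j hj
    simp only [coe_sdiff, Set.mem_sdiff, mem_coe, pointsInClosedBox, pointsInBox, mem_filter_univ]
    exact ⟨q_le j hj, fun h => (h j).not_ge (le_q j hj)⟩
  calc (#A : ℝ) ≤ #(pointsInClosedBox x t \ pointsInBox x t) := by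
        exact_mod_cast card_le_card_of_injOn q q_mapsTo q_injOn
    _ ≤ 2 * N * starDisc x := card_pointsInClosedBox_sdiff_pointsInBox_le hx ht

/-- The corner of the box with side `r` in the directions of `J` and side `1` in the others. -/
def corner (r : ℝ) (J : Finset (Fin s)) (j : Fin s) : ℝ := if j ∈ J then r else 1

/-- The directions `j` for which the `n`-th point lies in the slab `r ≤ x_j`. -/
noncomputable def slabs (x : Fin N → Fin s → ℝ) (r : ℝ) (n : Fin N) : Finset (Fin s) :=
  {j | r ≤ x n j}

/-- The points that lie in the slab `r ≤ x_j` of exactly one direction `j ∈ J`. -/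
noncomputable def exclusive (x : Fin N → Fin s → ℝ) (r : ℝ) (J : Finset (Fin s)) :
    Finset (Fin N) :=
  {n | #(slabs x r n ∩ J) = 1}

/-- The directions in `J` whose slab contains a point exclusive for `J`. -/
noncomputable def active (x : Fin N → Fin s → ℝ) (r : ℝ) (J : Finset (Fin s)) : Finset (Fin s) :=
  {j ∈ J | ∃ n ∈ exclusive x r J, r ≤ x n j}

lemma corner_mem_Icc (hr : r ∈ Set.Icc (0 : ℝ) 1) (J : Finset (Fin s)) (j : Fin s) :
    corner r J j ∈ Set.Icc (0 : ℝ) 1 := by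
  unfold corner
  split_ifs
  exacts [hr, ⟨zero_le_one, le_rfl⟩]

lemma prod_corner (r : ℝ) (J : Finset (Fin s)) : ∏ j, corner r J j = r ^ #J := by
  simp only [corner, Fintype.prod_ite_mem, prod_const]

lemma abs_card_pointsInBox_corner_sub_le (x : Fin N → Fin s → ℝ) (hr : r ∈ Set.Icc (0 : ℝ) 1)
    (J : Finset (Fin s)) : |(#(pointsInBox x (corner r J)) : ℝ) - N * r ^ #J| ≤ N * starDisc x := by
  simpa only [prod_corner] using abs_card_pointsInBox_sub_le x (corner_mem_Icc hr J)

lemma pointsInBox_corner (hx : ∀ n j, x n j ∈ Set.Ico (0 : ℝ) 1) (r : ℝ) (J : Finset (Fin s)) :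
    pointsInBox x (corner r J) =
      ({n | Disjoint (slabs x r n) J} : Finset (Fin N)) := by
  ext n
  simp only [pointsInBox, mem_filter_univ, disjoint_right]
  refine forall_congr' fun j => ?_
  by_cases hj : j ∈ J <;> simp [corner, slabs, hj, (hx n j).2]

lemma eq_of_mem_exclusive {n : Fin N} {i j : Fin s} (hn : n ∈ exclusive x r J)
    (hi : i ∈ J) (hin : r ≤ x n i) (hj : j ∈ J) (hjn : r ≤ x n j) : i = j :=
  card_le_one.1 (mem_filter.1 hn).2.le i (by simp [slabs, hi, hin]) j (by simp [slabs, hj, hjn])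

lemma card_active_le (hx : ∀ n j, x n j ∈ Set.Ico (0 : ℝ) 1) (hr : r ∈ Set.Icc (0 : ℝ) 1)
    (J : Finset (Fin s)) : (#(active x r J) : ℝ) ≤ 2 * N * starDisc x := by
  rcases N.eq_zero_or_pos with rfl | hN
  · simp [active]
  have : Nonempty (Fin N) := Fin.pos_iff_nonempty.1 hN
  have witness (j : Fin s) (hj : j ∈ active x r J) : ∃ n ∈ exclusive x r J, r ≤ x n j :=
    (mem_filter.1 hj).2
  choose! q q_exclusive le_q using witness
  have active_subset {j : Fin s} (hj : j ∈ active x r J) : j ∈ J := (mem_filter.1 hj).1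
  set t : Fin s → ℝ := fun j => if j ∈ active x r J then x (q j) j else corner r J j with t_def
  have ht (j : Fin s) : t j ∈ Set.Icc (0 : ℝ) 1 := by
    simp only [t_def]
    split_ifs
    exacts [Set.Ico_subset_Icc_self (hx _ j), corner_mem_Icc hr J j]
  have q_le {j : Fin s} (hj : j ∈ active x r J) (i : Fin s) : x (q j) i ≤ t i := by
    have lt_r (hi : i ∈ J) (hne : j ≠ i) : x (q j) i < r := lt_of_not_ge fun h =>
      hne (eq_of_mem_exclusive (q_exclusive j hj) (active_subset hj) (le_q j hj) hi h)
    by_cases hij : j = i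
    · simp [t_def, ← hij, hj]
    by_cases hi : i ∈ active x r J
    · simpa only [t_def, if_pos hi] using
        (lt_r (active_subset hi) hij).le.trans (le_q i hi)
    by_cases hiJ : i ∈ J
    · simpa only [t_def, if_neg hi, corner, if_pos hiJ] using (lt_r hiJ hij).le
    · simpa only [t_def, if_neg hi, corner, if_neg hiJ] using (hx _ i).2.le
  have q_injOn : Set.InjOn q (active x r J) := fun i hi j hj hq =>
    eq_of_mem_exclusive (q_exclusive i hi) (active_subset hi) (le_q i hi) (active_subset hj)
      (hq ▸ le_q j hj)
  exact card_le_of_injOn_of_mem_facets hx ht q_injOn (fun j hj => q_le hj) fun j hj => by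
    simp [t_def, mem_coe.1 hj]

lemma exclusive_subset (hx : ∀ n j, x n j ∈ Set.Ico (0 : ℝ) 1) (r : ℝ) (J : Finset (Fin s)) :
    exclusive x r J ⊆ pointsInBox x (corner r (J \ active x r J)) \ pointsInBox x (corner r J) := by
  intro n hn
  obtain ⟨j, hj⟩ := card_eq_one.1 (mem_filter.1 hn).2
  simp only [pointsInBox_corner hx, mem_sdiff, mem_filter_univ]
  refine ⟨disjoint_left.2 fun i hi hiJ => ?_, fun h => ?_⟩
  · exact (mem_sdiff.1 hiJ).2
      (mem_filter.2 ⟨(mem_sdiff.1 hiJ).1, n, hn, (mem_filter.1 hi).2⟩)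
  · exact singleton_ne_empty j (hj.symm.trans (disjoint_iff_inter_eq_empty.1 h))

lemma card_exclusive_le (hx : ∀ n j, x n j ∈ Set.Ico (0 : ℝ) 1) (hr : r ∈ Set.Icc (0 : ℝ) 1)
    (J : Finset (Fin s)) :
    (#(exclusive x r J) : ℝ) ≤ N * ((1 - r) * #(active x r J) + 2 * starDisc x) := by
  have active_subset : active x r J ⊆ J := filter_subset _ _
  have box_subset : pointsInBox x (corner r J) ⊆ pointsInBox x (corner r (J \ active x r J)) := by
    simp only [pointsInBox_corner hx]
    exact monotone_filter_right _ fun n _ hn => hn.mono_right sdiff_subset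
  have card_le : (#(exclusive x r J) : ℝ) ≤
      #(pointsInBox x (corner r (J \ active x r J))) - #(pointsInBox x (corner r J)) := by
    rw [← cast_card_sdiff box_subset]
    exact_mod_cast card_le_card (exclusive_subset hx r J)
  have volume_gain : r ^ #(J \ active x r J) - r ^ #J ≤ (1 - r) * #(active x r J) := by
    have bernoulli := one_add_mul_sub_le_pow (by linarith [hr.1] : -1 ≤ r) #(active x r J)
    calc r ^ #(J \ active x r J) - r ^ #J
        = r ^ #(J \ active x r J) * (1 - r ^ #(active x r J)) := by
          rw [← card_sdiff_add_card_eq_card active_subset]; ring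
      _ ≤ 1 * (1 - r ^ #(active x r J)) :=
          mul_le_mul_of_nonneg_right (pow_le_one₀ hr.1 hr.2)
            (sub_nonneg.2 (pow_le_one₀ hr.1 hr.2))
      _ ≤ (1 - r) * #(active x r J) := by linarith
  linarith [(abs_le.1 (abs_card_pointsInBox_corner_sub_le x hr (J \ active x r J))).2,
    (abs_le.1 (abs_card_pointsInBox_corner_sub_le x hr J)).1,
    mul_le_mul_of_nonneg_left volume_gain (Nat.cast_nonneg (α := ℝ) N)]

lemma sum_card_pointsInBox_corner_le (hx : ∀ n j, x n j ∈ Set.Ico (0 : ℝ) 1) (r : ℝ) :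
    ∑ J, (#(pointsInBox x (corner r J)) : ℝ) ≤
      ∑ J, (#(exclusive x r J) : ℝ) + 2 ^ s * #(pointsInBox x (corner r univ)) := by
  simp only [pointsInBox_corner hx]
  exact_mod_cast (by
    simpa [exclusive, disjoint_iff_inter_eq_empty] using sum_card_disjoint_le (slabs x r))

lemma exists_le_card_exclusive (hx : ∀ n j, x n j ∈ Set.Ico (0 : ℝ) 1)
    (hr : r ∈ Set.Icc (0 : ℝ) 1) :
    ∃ J, N * (((1 + r) / 2) ^ s - r ^ s - 2 * starDisc x) ≤ #(exclusive x r J) := by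
  have double_count := sum_card_pointsInBox_corner_le hx r
  have card_le : (#(pointsInBox x (corner r univ)) : ℝ) ≤ N * r ^ s + N * starDisc x := by
    have h := (abs_le.1 (abs_card_pointsInBox_corner_sub_le x hr univ)).2
    rw [card_univ, Fintype.card_fin] at h
    linarith
  have sum_ge : N * ((1 + r) ^ s - 2 ^ s * starDisc x) ≤
      ∑ J, (#(pointsInBox x (corner r J)) : ℝ) := by
    calc N * ((1 + r) ^ s - 2 ^ s * starDisc x)
        = ∑ J : Finset (Fin s), (N * r ^ #J - N * starDisc x) := by
          have binomial := Fintype.sum_pow_mul_eq_add_pow (Fin s) r 1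
          simp only [one_pow, mul_one, Fintype.card_fin] at binomial
          rw [sum_sub_distrib, ← mul_sum, binomial, sum_const, card_univ, Fintype.card_finset,
            Fintype.card_fin, nsmul_eq_mul, Nat.cast_pow, Nat.cast_ofNat]
          ring
      _ ≤ _ := sum_le_sum fun J _ => by
          linarith [(abs_le.1 (abs_card_pointsInBox_corner_sub_le x hr J)).1]
  have average_le : ∑ _J : Finset (Fin s), N * (((1 + r) / 2) ^ s - r ^ s - 2 * starDisc x) ≤
      ∑ J, (#(exclusive x r J) : ℝ) := by
    rw [sum_const, card_univ, Fintype.card_finset, Fintype.card_fin, nsmul_eq_mul, Nat.cast_pow,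
      Nat.cast_ofNat, div_pow]
    calc 2 ^ s * (N * ((1 + r) ^ s / 2 ^ s - r ^ s - 2 * starDisc x))
        = N * ((1 + r) ^ s - 2 ^ s * starDisc x) - 2 ^ s * (N * r ^ s + N * starDisc x) := by
          field_simp
          ring
      _ ≤ ∑ J, (#(exclusive x r J) : ℝ) := by
          linarith [mul_le_mul_of_nonneg_left card_le (pow_nonneg (zero_le_two (α := ℝ)) s)]
  simpa only [mem_univ, true_and] using exists_le_of_sum_le univ_nonempty average_le

lemma volume_gap_le_starDisc (hN : 0 < N) (hx : ∀ n j, x n j ∈ Set.Ico (0 : ℝ) 1)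
    (hr : r ∈ Set.Icc (0 : ℝ) 1) :
    ((1 + r) / 2) ^ s - r ^ s ≤ (2 * N * (1 - r) + 4) * starDisc x := by
  obtain ⟨J, hJ⟩ := exists_le_card_exclusive hx hr
  have cancelled := le_of_mul_le_mul_left (hJ.trans (card_exclusive_le hx hr J))
    (Nat.cast_pos.2 hN)
  have active_le := mul_le_mul_of_nonneg_left (card_active_le hx hr J) (sub_nonneg.2 hr.2)
  linarith

lemma one_eighth_le_volume_gap (hs : 1 ≤ s) :
    (1 / 8 : ℝ) ≤ ((1 + (1 - 1 / (s : ℝ))) / 2) ^ s - (1 - 1 / (s : ℝ)) ^ s := by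
  have hs' : (1 : ℝ) ≤ s := by exact_mod_cast hs
  have inv_le : 1 / (s : ℝ) ≤ 1 := div_le_one_of_le₀ hs' (by positivity)
  have half_le : (1 / 2 : ℝ) ≤ ((1 + (1 - 1 / (s : ℝ))) / 2) ^ s := by
    refine le_of_eq_of_le ?_ (one_add_mul_sub_le_pow (by linarith) s)
    field_simp
    ring
  have pow_le : (1 - 1 / (s : ℝ)) ^ s ≤ 3 / 8 := by
    calc (1 - 1 / (s : ℝ)) ^ s ≤ Real.exp (-1) := Real.one_sub_div_pow_le_exp_neg hs'
      _ ≤ 3 / 8 := by linarith [Real.exp_neg_one_lt_d9]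
  linarith

theorem div_le_starDisc (hN : 0 < N) (hs : 1 ≤ s) (hx : ∀ n j, x n j ∈ Set.Ico (0 : ℝ) 1) :
    (s : ℝ) / (16 * N + 32 * s) ≤ starDisc x := by
  have hs' : (1 : ℝ) ≤ s := by exact_mod_cast hs
  have hr : 1 - 1 / (s : ℝ) ∈ Set.Icc (0 : ℝ) 1 :=
    ⟨sub_nonneg.2 (div_le_one_of_le₀ hs' (by positivity)), sub_le_self _ (by positivity)⟩
  have gap := (one_eighth_le_volume_gap hs).trans (volume_gap_le_starDisc hN hx hr)
  rw [sub_sub_cancel] at gap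
  rw [div_le_iff₀ (by positivity)]
  calc (s : ℝ) = 8 * s * (1 / 8) := by ring
    _ ≤ 8 * s * ((2 * N * (1 / s) + 4) * starDisc x) := by gcongr
    _ = starDisc x * (16 * N + 32 * s) := by field_simp; ring

theorem div_le_minDisc (hN : 0 < N) (hs : 1 ≤ s) :
    (s : ℝ) / (16 * N + 32 * s) ≤ minDisc N s := by
  refine le_csInf ⟨_, fun _ _ => 0, fun _ _ => ⟨le_rfl, zero_lt_one⟩, rfl⟩ ?_
  rintro _ ⟨x, hx, rfl⟩
  exact div_le_starDisc hN hs hx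

end Discrepancy

section Grid

lemma norm_prod_sub_prod_le {ι R : Type*} [NormedCommRing R] [NormOneClass R] (S : Finset ι)
    {a b : ι → R} (ha : ∀ j ∈ S, ‖a j‖ ≤ 1) (hb : ∀ j ∈ S, ‖b j‖ ≤ 1) :
    ‖∏ j ∈ S, a j - ∏ j ∈ S, b j‖ ≤ ∑ j ∈ S, ‖a j - b j‖ := by
  classical
  induction S using Finset.induction_on with
  | empty => simp
  | insert i S hi ih =>
    simp only [forall_mem_insert] at ha hb
    have prod_b_le : ‖∏ j ∈ S, b j‖ ≤ 1 :=
      (Finset.norm_prod_le _ _).trans (prod_le_one (fun _ _ => norm_nonneg _) hb.2)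
    rw [prod_insert hi, prod_insert hi, sum_insert hi]
    calc ‖a i * ∏ j ∈ S, a j - b i * ∏ j ∈ S, b j‖
        = ‖(a i - b i) * ∏ j ∈ S, b j + a i * (∏ j ∈ S, a j - ∏ j ∈ S, b j)‖ := by
          congr 1; ring
      _ ≤ ‖a i - b i‖ * ‖∏ j ∈ S, b j‖ + ‖a i‖ * ‖∏ j ∈ S, a j - ∏ j ∈ S, b j‖ :=
          (norm_add_le _ _).trans (add_le_add (norm_mul_le _ _) (norm_mul_le _ _))
      _ ≤ ‖a i - b i‖ * 1 + 1 * ∑ j ∈ S, ‖a j - b j‖ := by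
          gcongr
          exacts [ha.1, ih ha.2 hb.2]
      _ = ‖a i - b i‖ + ∑ j ∈ S, ‖a j - b j‖ := by ring

variable {m s : ℕ}

/-- The regular grid with mesh `1 / m` in `[0,1)^s`, enumerated by base-`m` digits. -/
noncomputable def gridPoints (m s : ℕ) (n : Fin (m ^ s)) (j : Fin s) : ℝ :=
  (finFunctionFinEquiv.symm n j : ℕ) / m

lemma gridPoints_mem_Ico (n : Fin (m ^ s)) (j : Fin s) :
    gridPoints m s n j ∈ Set.Ico (0 : ℝ) 1 := by
  have digit_lt := (finFunctionFinEquiv.symm n j).isLt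
  refine ⟨by unfold gridPoints; positivity, ?_⟩
  rw [gridPoints, div_lt_one (by exact_mod_cast digit_lt.pos)]
  exact_mod_cast digit_lt

lemma card_pointsInBox_gridPoints (hm : 0 < m) {t : Fin s → ℝ} (ht : ∀ j, t j ≤ 1) :
    #(pointsInBox (gridPoints m s) t) = ∏ j, ⌈m * t j⌉₊ := by
  have hm' : (0 : ℝ) < m := by exact_mod_cast hm
  calc #(pointsInBox (gridPoints m s) t)
      = #(Fintype.piFinset fun j => ({i | (i : ℕ) < ⌈m * t j⌉₊} : Finset (Fin m))) := by
        refine card_equiv finFunctionFinEquiv.symm fun n => ?_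
        simp only [pointsInBox, gridPoints, mem_filter_univ, Fintype.mem_piFinset, Nat.lt_ceil,
          div_lt_iff₀' hm']
    _ = ∏ j, ⌈m * t j⌉₊ := by
        rw [Fintype.card_piFinset]
        refine prod_congr rfl fun j _ => ?_
        rw [Fin.card_filter_val_lt, min_eq_right]
        exact Nat.ceil_le.2 (mul_le_of_le_one_right hm'.le (ht j))

lemma starDisc_gridPoints_le (hm : 0 < m) : starDisc (gridPoints m s) ≤ (s : ℝ) / m := by
  have hm' : (0 : ℝ) < m := by exact_mod_cast hm
  refine Real.sSup_le ?_ (by positivity)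
  rintro _ ⟨t, ht, rfl⟩
  have ceil_le (j : Fin s) : (⌈m * t j⌉₊ : ℝ) ≤ m := by
    exact_mod_cast Nat.ceil_le.2 (mul_le_of_le_one_right hm'.le (ht j).2)
  have ceil_sub_le (j : Fin s) : |(⌈m * t j⌉₊ : ℝ) / m - t j| ≤ 1 / m := by
    have h := Nat.abs_ceil_sub_le (mul_nonneg hm'.le (ht j).1)
    rwa [div_sub' hm'.ne', abs_div, abs_of_pos hm', div_le_div_iff_of_pos_right hm']
  calc |localDisc (gridPoints m s) t|
      = |∏ j, (⌈m * t j⌉₊ : ℝ) / m - ∏ j, t j| := by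
        rw [prod_div_distrib, Fin.prod_const, ← Nat.cast_pow,
          ← Nat.cast_prod, ← card_pointsInBox_gridPoints hm fun j => (ht j).2]
        rfl
    _ ≤ ∑ j, |(⌈m * t j⌉₊ : ℝ) / m - t j| := by
        simp only [← Real.norm_eq_abs]
        refine norm_prod_sub_prod_le univ (fun j _ => ?_) fun j _ => ?_
        · rw [Real.norm_of_nonneg (by positivity)]
          exact div_le_one_of_le₀ (ceil_le j) hm'.le
        · rw [Real.norm_of_nonneg (ht j).1]
          exact (ht j).2
    _ ≤ ∑ _j : Fin s, 1 / (m : ℝ) := sum_le_sum fun j _ => ceil_sub_le j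
    _ = s / m := by simp [div_eq_mul_inv]

lemma exists_minDisc_le (s : ℕ) {ε : ℝ} (hε : 0 < ε) : ∃ N : ℕ, 1 ≤ N ∧ minDisc N s ≤ ε := by
  obtain ⟨m, hm⟩ := exists_nat_gt (s / ε)
  have hm' : (0 : ℝ) < m := lt_of_le_of_lt (by positivity) hm
  have hm_pos : 0 < m := by exact_mod_cast hm'
  refine ⟨m ^ s, Nat.one_le_pow _ _ hm_pos, ?_⟩
  calc minDisc (m ^ s) s ≤ starDisc (gridPoints m s) := minDisc_le_starDisc gridPoints_mem_Ico
    _ ≤ s / m := starDisc_gridPoints_le hm_pos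
    _ ≤ ε := (div_le_comm₀ hε hm').1 hm.le

end Grid

lemma invDisc_spec (s : ℕ) {ε : ℝ} (hε : 0 < ε) :
    1 ≤ invDisc s ε ∧ minDisc (invDisc s ε) s ≤ ε :=
  Nat.sInf_mem (exists_minDisc_le s hε)

/-- `N(s,ε) ≥ c s ε⁻¹` for constants `c, ε₀ > 0` and all `ε ∈ (0,ε₀)`. -/
theorem invDisc_lower_bound :
    ∃ c ε₀ : ℝ, 0 < c ∧ 0 < ε₀ ∧ ∀ s : ℕ, 1 ≤ s → ∀ ε : ℝ, ε ∈ Set.Ioo (0:ℝ) ε₀ →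
      c * (s : ℝ) / ε ≤ (invDisc s ε : ℝ) := by
  refine ⟨1 / 32, 1 / 64, by norm_num, by norm_num, fun s hs ε ⟨hε, hε_lt⟩ => ?_⟩
  obtain ⟨one_le, minDisc_le⟩ := invDisc_spec s hε
  have s_pos : (0 : ℝ) < s := by exact_mod_cast hs
  have denom_pos : (0 : ℝ) < 16 * invDisc s ε + 32 * s :=
    add_pos_of_nonneg_of_pos (by positivity) (mul_pos (by norm_num) s_pos)
  have s_le := (div_le_iff₀ denom_pos).1 ((div_le_minDisc one_le hs).trans minDisc_le)
  rw [div_le_iff₀ hε]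
  linarith [mul_lt_mul_of_pos_right hε_lt s_pos]
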